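/- Let n and k be positive integers with 6 ≤ k ≤ n − 1, and write n = ℓ·(k+1) + r with 0 ≤ r ≤ k. If r ≥ 1, k + r is even, k is odd, and ℓ ≥ 2, then s(n,k) = (nk + 1)/2. -/

import Mathlib

open Finset

variable {V : Type*}

/-- A fractional perfect matching of a finite simple graph. -/
def SimpleGraph.IsFracPerfectMatching [Fintype V] [DecidableEq V]
    (G : SimpleGraph V) (f : Sym2 V → ℝ) : Prop :=
  (∀ e, 0 ≤ f e ∧ f e ≤ 1) ∧ (∀ e, e ∉ G.edgeSet → f e = 0) ∧
    ∀ v : V, ∑ e ∈ Finset.univ.filter (fun e : Sym2 V => v ∈ e), f e = 1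

/-- `G` has a fractional perfect matching. -/
def SimpleGraph.HasFPM [Fintype V] [DecidableEq V] (G : SimpleGraph V) : Prop :=
  ∃ f, G.IsFracPerfectMatching f

/-- The fractional matching preclusion number of `G`. -/
noncomputable def SimpleGraph.fmp [Fintype V] [DecidableEq V] (G : SimpleGraph V) : ℕ :=
  sInf {k | ∃ F : Finset (Sym2 V), ↑F ⊆ G.edgeSet ∧ F.card = k ∧
    ¬ (G.deleteEdges ↑F).HasFPM}

/-- The minimum degree of `G`. -/
noncomputable def SimpleGraph.minDeg [Fintype V] (G : SimpleGraph V) : ℕ :=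
  sInf {d | ∃ v : V, (G.neighborSet v).ncard = d}

/-- A graph contains a Hamiltonian cycle. -/
def SimpleGraph.IsHamil {W : Type*} [DecidableEq W] (G : SimpleGraph W) : Prop :=
  ∃ (a : W) (p : G.Walk a a), p.IsHamiltonianCycle

/-- The induced subgraph on `A` is a `K₂`. -/
def SimpleGraph.IsK2Part [DecidableEq V] (G : SimpleGraph V) (A : Finset V) : Prop :=
  ∃ u v : V, A = {u, v} ∧ G.Adj u v

/-!
Each vertex `v` satisfies `fmp G ≤ deg v`, since deleting all edges at `v` destroys every fractional
perfect matching. Hence `n * fmp G ≤ 2 * |E|`. For `k ≥ 6` the bound is attained by Harary graphs,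
which have minimum degree `k`, `⌈nk / 2⌉` edges and `fmp = k` for the following reason.

If deleting `F` destroys every fractional perfect matching, then by Hall's theorem there are
disjoint sets `S` and `I` with `|S| < |I|` such that all edges from `I` to the complement of `S` lie
in `F`. If `|S| ≤ k - 3`, then every vertex of `I` meets at least `k - |S|` edges of `F`, and
counting them gives `|F| ≥ k`. If `|S| ≥ k - 2`, use the circulant part of the graph: its triangles
`{v, v + 1, v + 3}` are pairwise edge-disjoint. Give weight `1` to the vertices in `I`, weight `-1`
to those in `S` and weight `0` to all others, so that every edge of the circulant part with positive
total weight belongs to `F`. If `x`, `y`, `z` are the weights of the vertices of a triangle, at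
least `(x + y + z + |x|) / 2` of its edges have positive weight; summing over all triangles gives
`2 * |F| ≥ 3 * (|I| - |S|) + (|I| + |S|) ≥ 2 * |S| + 4`.
-/

/-- Moving half a unit of weight along every arc `v → σ v` covers each vertex exactly once. -/
theorem hasFPM_of_perm [Fintype V] [DecidableEq V] {G : SimpleGraph V} (σ : Equiv.Perm V)
    (hσ : ∀ v, G.Adj v (σ v)) : G.HasFPM := by
  let f : Sym2 V → ℝ := fun e => ∑ u, if s(u, σ u) = e then 1 / 2 else 0
  have hf_nonneg (e) : 0 ≤ f e := Finset.sum_nonneg fun u _ => by split_ifs <;> norm_num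
  have hf_sum (v : V) : ∑ e with v ∈ e, f e = 1 := by
    have harc (u : V) : ∑ e with v ∈ e, (if s(u, σ u) = e then (1 / 2 : ℝ) else 0) =
        (if u = v then 1 / 2 else 0) + if σ u = v then 1 / 2 else 0 := by
      have hne := (hσ u).ne
      rw [Finset.sum_ite_eq]
      simp only [Finset.mem_filter, Finset.mem_univ, true_and, Sym2.mem_iff]
      grind
    calc ∑ e with v ∈ e, f e
        = ∑ u, ((if u = v then 1 / 2 else 0) + if σ u = v then 1 / 2 else 0) := by
          rw [Finset.sum_comm]
          exact Finset.sum_congr rfl fun u _ => harc u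
      _ = 1 := by
          rw [Finset.sum_add_distrib,
            Equiv.sum_comp σ fun u => if u = v then (1 / 2 : ℝ) else 0]
          norm_num
  refine ⟨f, fun e => ⟨hf_nonneg e, ?_⟩, fun e he => ?_, hf_sum⟩
  · induction e with
    | h x y =>
      rw [← hf_sum x]
      exact Finset.single_le_sum (fun e _ => hf_nonneg e) (by simp)
  · refine Finset.sum_eq_zero fun u _ => if_neg ?_
    rintro rfl
    exact he (hσ u)

-- This is the nontrivial direction of the fractional Tutte theorem: deleting `S` isolates `I`.
theorem exists_card_lt_card_of_not_hasFPM [Fintype V] [DecidableEq V] {G : SimpleGraph V}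
    (hG : ¬ G.HasFPM) :
    ∃ S I : Finset V, Disjoint I S ∧ #S < #I ∧ ∀ u ∈ I, ∀ v, G.Adj u v → v ∈ S := by
  classical
  have hHall : ¬ ∀ X : Finset V, #X ≤ #(X.biUnion fun v => G.neighborFinset v) := by
    rw [Finset.all_card_le_biUnion_card_iff_exists_injective]
    rintro ⟨p, hp, hadj⟩
    exact hG (hasFPM_of_perm (Equiv.ofBijective p (Finite.injective_iff_bijective.mp hp))
      fun v => by simpa using hadj v)
  push Not at hHall
  obtain ⟨X, hX⟩ := hHall
  set N := X.biUnion fun v => G.neighborFinset v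
  have hN {u v : V} (hu : u ∈ X) (huv : G.Adj u v) : v ∈ N :=
    Finset.mem_biUnion.mpr ⟨u, hu, by simpa using huv⟩
  refine ⟨N \ X, X \ N, disjoint_sdiff_sdiff, Finset.card_sdiff_lt_card_sdiff_iff.mpr hX, ?_⟩
  intro u hu v huv
  rw [Finset.mem_sdiff] at hu ⊢
  exact ⟨hN hu.1 huv, fun hv => hu.2 (hN hv huv.symm)⟩

theorem not_hasFPM_deleteEdges_incidenceFinset [Fintype V] [DecidableEq V] (G : SimpleGraph V)
    (v : V) [Fintype (G.neighborSet v)] : ¬ (G.deleteEdges ↑(G.incidenceFinset v)).HasFPM := by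
  rintro ⟨f, -, hf_zero, hf_sum⟩
  refine zero_ne_one ((Finset.sum_eq_zero fun e he => hf_zero e ?_).symm.trans (hf_sum v))
  rw [SimpleGraph.edgeSet_deleteEdges, SimpleGraph.coe_incidenceFinset]
  exact fun h => h.2 ⟨h.1, (Finset.mem_filter.mp he).2⟩

theorem coe_incidenceFinset_subset_edgeSet [DecidableEq V] (G : SimpleGraph V) (v : V)
    [Fintype (G.neighborSet v)] : (G.incidenceFinset v : Set (Sym2 V)) ⊆ G.edgeSet := by
  rw [SimpleGraph.coe_incidenceFinset]
  exact G.incidenceSet_subset v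

theorem fmp_le_degree [Fintype V] [DecidableEq V] (G : SimpleGraph V) (v : V)
    [Fintype (G.neighborSet v)] : G.fmp ≤ G.degree v :=
  Nat.sInf_le ⟨G.incidenceFinset v, coe_incidenceFinset_subset_edgeSet G v,
    G.card_incidenceFinset_eq_degree v, not_hasFPM_deleteEdges_incidenceFinset G v⟩

theorem le_fmp [Fintype V] [DecidableEq V] [Nonempty V] {G : SimpleGraph V} {k : ℕ}
    (h : ∀ F : Finset (Sym2 V), ¬ (G.deleteEdges ↑F).HasFPM → k ≤ #F) : k ≤ G.fmp := by
  classical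
  obtain ⟨v⟩ := ‹Nonempty V›
  refine le_csInf ⟨_, G.incidenceFinset v, coe_incidenceFinset_subset_edgeSet G v, rfl,
    not_hasFPM_deleteEdges_incidenceFinset G v⟩ ?_
  rintro _ ⟨F, -, rfl, hF⟩
  exact h F hF

theorem sum_degrees_eq_two_mul_ncard_edgeSet [Fintype V] (G : SimpleGraph V)
    [DecidableRel G.Adj] : ∑ v, G.degree v = 2 * G.edgeSet.ncard := by
  classical
  rw [← SimpleGraph.coe_edgeFinset, Set.ncard_coe_finset, G.sum_degrees_eq_twice_card_edges]

theorem card_mul_le_two_mul_ncard_edgeSet [Fintype V] {G : SimpleGraph V} [DecidableRel G.Adj]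
    {I : Finset V} {d : ℕ} (hd : ∀ u ∈ I, d ≤ G.degree u) : #I * d ≤ 2 * G.edgeSet.ncard := by
  rw [← sum_degrees_eq_two_mul_ncard_edgeSet, ← smul_eq_mul]
  exact (Finset.card_nsmul_le_sum I _ d hd).trans
    (Finset.sum_le_sum_of_subset (Finset.subset_univ I))

theorem card_mul_fmp_le_two_mul_ncard_edgeSet [Fintype V] [DecidableEq V] (G : SimpleGraph V) :
    Fintype.card V * G.fmp ≤ 2 * G.edgeSet.ncard := by
  classical
  exact card_mul_le_two_mul_ncard_edgeSet fun v _ => fmp_le_degree G v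

theorem degree_le_ncard_edgeSet [Fintype V] (G : SimpleGraph V) [DecidableRel G.Adj] (u : V) :
    G.degree u ≤ G.edgeSet.ncard := by
  classical
  rw [← SimpleGraph.coe_edgeFinset, Set.ncard_coe_finset]
  exact G.degree_le_card_edgeFinset u

theorem degree_add_degree_le_ncard_edgeSet_add_one [Fintype V] {G : SimpleGraph V}
    [DecidableRel G.Adj] {u v : V} (huv : u ≠ v) :
    G.degree u + G.degree v ≤ G.edgeSet.ncard + 1 := by
  classical
  have hunion := Finset.card_le_card
    (Finset.union_subset (G.incidenceFinset_subset u) (G.incidenceFinset_subset v))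
  have hinter : #(G.incidenceFinset u ∩ G.incidenceFinset v) ≤ 1 := by
    refine (Finset.card_le_card ?_).trans (Finset.card_singleton s(u, v)).le
    rw [← Finset.coe_subset]
    simpa using G.incidenceSet_inter_incidenceSet_subset huv
  rw [← G.card_incidenceFinset_eq_degree u, ← G.card_incidenceFinset_eq_degree v,
    ← Finset.card_union_add_card_inter, ← SimpleGraph.coe_edgeFinset, Set.ncard_coe_finset]
  exact add_le_add hunion hinter

theorem add_le_ncard_edgeSet_of_lt_card [Fintype V] {G : SimpleGraph V} [DecidableRel G.Adj]
    {I : Finset V} {b d : ℕ} (hI : b < #I) (hd : ∀ u ∈ I, d ≤ G.degree u) (hd3 : 3 ≤ d)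
    (hbd : 6 ≤ b + d) : b + d ≤ G.edgeSet.ncard := by
  obtain rfl | rfl | hb : b = 0 ∨ b = 1 ∨ 2 ≤ b := by omega
  · obtain ⟨u, hu⟩ := Finset.card_pos.mp hI
    have := hd u hu
    have := degree_le_ncard_edgeSet G u
    omega
  · obtain ⟨u, hu, v, hv, huv⟩ := Finset.one_lt_card.mp hI
    have := hd u hu
    have := hd v hv
    have := degree_add_degree_le_ncard_edgeSet_add_one (G := G) huv
    omega
  · have hsum := card_mul_le_two_mul_ncard_edgeSet hd
    nlinarith [Nat.mul_le_mul_right d hI]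

theorem le_card_of_forall_le_degree [Fintype V] {G : SimpleGraph V} [DecidableRel G.Adj]
    {k : ℕ} {S I : Finset V} {F : Finset (Sym2 V)} (hk : 6 ≤ k)
    (hdeg : ∀ u ∈ I, k ≤ G.degree u) (hSI : #S < #I) (hSk : #S + 3 ≤ k)
    (hF : ∀ u ∈ I, ∀ v ∉ S, G.Adj u v → s(u, v) ∈ F) : k ≤ #F := by
  classical
  let H := SimpleGraph.fromEdgeSet (F : Set (Sym2 V))
  have hH_deg : ∀ u ∈ I, k - #S ≤ H.degree u := by
    intro u hu
    have hsub : G.neighborFinset u \ S ⊆ H.neighborFinset u := by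
      intro v hv
      rw [Finset.mem_sdiff, SimpleGraph.mem_neighborFinset] at hv
      rw [SimpleGraph.mem_neighborFinset, SimpleGraph.fromEdgeSet_adj]
      exact ⟨hF u hu v hv.2 hv.1, hv.1.ne⟩
    calc k - #S ≤ #(G.neighborFinset u) - #S := Nat.sub_le_sub_right (hdeg u hu) _
      _ ≤ #(G.neighborFinset u \ S) := Finset.le_card_sdiff _ _
      _ ≤ H.degree u := Finset.card_le_card hsub
  calc k = #S + (k - #S) := by omega
    _ ≤ H.edgeSet.ncard := add_le_ncard_edgeSet_of_lt_card hSI hH_deg (by omega) (by omega)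
    _ ≤ (F : Set (Sym2 V)).ncard :=
      Set.ncard_le_ncard ((SimpleGraph.edgeSet_fromEdgeSet _).trans_subset Set.sdiff_subset)
        F.finite_toSet
    _ = #F := Set.ncard_coe_finset F

section Cayley

open scoped Pointwise

variable {Γ : Type*} [AddGroup Γ] [DecidableEq Γ]

theorem zero_notMem_of_disjoint_neg {D : Finset Γ} (hD : Disjoint D (-D)) : 0 ∉ D := fun h =>
  Finset.disjoint_left.mp hD h (by simpa using Finset.neg_mem_neg h)

theorem injOn_mk_add {D : Finset Γ} (hD : Disjoint D (-D)) :
    Set.InjOn (fun x : Γ × Γ => s(x.1, x.1 + x.2)) {x | x.2 ∈ D} := by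
  rintro ⟨u, d⟩ (hd : d ∈ D) ⟨v, e⟩ (he : e ∈ D) h
  obtain ⟨rfl, h⟩ | ⟨rfl, h⟩ := Sym2.eq_iff.mp h
  · simpa using h
  · have hde : d = -e := by
      rw [add_assoc, add_eq_left] at h
      exact (neg_eq_of_add_eq_zero_right h).symm
    exact absurd (hde ▸ Finset.neg_mem_neg he) (Finset.disjoint_left.mp hD hd)

theorem sum_card_filter_mk_add_mem_le [Fintype Γ] {D : Finset Γ} (hD : Disjoint D (-D))
    (F : Finset (Sym2 Γ)) : ∑ d ∈ D, #{v | s(v, v + d) ∈ F} ≤ #F := by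
  calc ∑ d ∈ D, #{v | s(v, v + d) ∈ F}
      = #{x ∈ (Finset.univ : Finset Γ) ×ˢ D | s(x.1, x.1 + x.2) ∈ F} := by
        simp only [Finset.card_filter, Finset.sum_product_right]
    _ ≤ #F := by
        refine Finset.card_le_card_of_injOn (fun x => s(x.1, x.1 + x.2))
          (fun x hx => (Finset.mem_filter.mp hx).2) ((injOn_mk_add hD).mono fun x hx => ?_)
        exact (Finset.mem_product.mp (Finset.mem_filter.mp hx).1).2

theorem sum_triangle {M : Type*} [AddCommMonoid M] {a b : Γ} (hab : a ≠ b)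
    (hD : Disjoint {a, b, a + b} (-{a, b, a + b} : Finset Γ)) (f : Γ → M) :
    ∑ d ∈ {a, b, a + b}, f d = f a + f b + f (a + b) := by
  have hzero := zero_notMem_of_disjoint_neg hD
  simp only [Finset.mem_insert, Finset.mem_singleton, not_or] at hzero
  rw [Finset.sum_insert, Finset.sum_pair, add_assoc]
  · simpa using Ne.symm hzero.1
  · simpa [hab] using Ne.symm hzero.2.1

theorem sum_add_abs_le_two_mul_count_pos {x y z : ℤ} (hx : |x| ≤ 1) (hy : |y| ≤ 1) (hz : |z| ≤ 1) :
    x + y + z + |x| ≤ 2 * ((if 0 < x + y then 1 else 0) + (if 0 < y + z then 1 else 0) +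
      if 0 < x + z then 1 else 0) := by
  grind

theorem three_mul_sum_add_sum_abs_le [Fintype Γ] {a b : Γ} (hab : a ≠ b)
    (hD : Disjoint {a, b, a + b} (-{a, b, a + b} : Finset Γ)) {F : Finset (Sym2 Γ)} {w : Γ → ℤ}
    (hw : ∀ v, |w v| ≤ 1)
    (hF : ∀ v, ∀ d ∈ ({a, b, a + b} : Finset Γ), 0 < w v + w (v + d) → s(v, v + d) ∈ F) :
    3 * ∑ v, w v + ∑ v, |w v| ≤ 2 * #F := by
  let p (d v : Γ) : ℤ := if 0 < w v + w (v + d) then 1 else 0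
  have hshift (d : Γ) (f : Γ → ℤ) : ∑ v, f (v + d) = ∑ v, f v :=
    Equiv.sum_comp (Equiv.addRight d) f
  have hp_le (d : Γ) (hd : d ∈ ({a, b, a + b} : Finset Γ)) :
      ∑ v, p d v ≤ #{v | s(v, v + d) ∈ F} := by
    simp only [p, Finset.sum_boole]
    exact_mod_cast Finset.card_le_card (Finset.monotone_filter_right _ fun v _ => hF v d hd)
  calc 3 * ∑ v, w v + ∑ v, |w v|
      = ∑ v, (w v + w (v + a) + w (v + (a + b)) + |w v|) := by
        simp only [Finset.sum_add_distrib, hshift]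
        ring
    _ ≤ ∑ v, 2 * (p a v + p b (v + a) + p (a + b) v) := by
        refine Finset.sum_le_sum fun v _ => ?_
        simpa only [p, add_assoc] using sum_add_abs_le_two_mul_count_pos (hw v) (hw _) (hw _)
    _ = 2 * ∑ d ∈ {a, b, a + b}, ∑ v, p d v := by
        rw [sum_triangle hab hD, ← Finset.mul_sum, Finset.sum_add_distrib, Finset.sum_add_distrib,
          hshift a (p b)]
    _ ≤ 2 * ∑ d ∈ {a, b, a + b}, (#{v | s(v, v + d) ∈ F} : ℤ) := by
        gcongr with d hd
        exact hp_le d hd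
    _ ≤ 2 * #F := by
        have := sum_card_filter_mk_add_mem_le hD F
        gcongr
        exact_mod_cast this

theorem card_add_two_le_card_of_addCayley_le [Finite Γ] {a b : Γ} (hab : a ≠ b)
    (hD : Disjoint {a, b, a + b} (-{a, b, a + b} : Finset Γ)) {G : SimpleGraph Γ}
    (hG : SimpleGraph.addCayley {a, b, a + b} ≤ G) {S I : Finset Γ} {F : Finset (Sym2 Γ)}
    (hIS : Disjoint I S) (hSI : #S < #I)
    (hF : ∀ u ∈ I, ∀ v ∉ S, G.Adj u v → s(u, v) ∈ F) : #S + 2 ≤ #F := by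
  have := Fintype.ofFinite Γ
  let w (v : Γ) : ℤ := (if v ∈ I then 1 else 0) - if v ∈ S then 1 else 0
  have hdisj (v : Γ) (hv : v ∈ I) : v ∉ S := Finset.disjoint_left.mp hIS hv
  have hw_le (v : Γ) : |w v| ≤ 1 := by grind
  have hw_abs (v : Γ) : |w v| = (if v ∈ I then 1 else 0) + if v ∈ S then 1 else 0 := by grind
  have hwF (v d : Γ) (hd : d ∈ ({a, b, a + b} : Finset Γ)) (hpos : 0 < w v + w (v + d)) :
      s(v, v + d) ∈ F := by
    have hd0 : d ≠ 0 := ne_of_mem_of_not_mem hd (zero_notMem_of_disjoint_neg hD)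
    have hadj : G.Adj v (v + d) :=
      ((SimpleGraph.addCayley_le_iff _ G).mp hG d (by simpa using hd) v (by simpa using hd0)).symm
    obtain ⟨hv, hvd⟩ | ⟨hvd, hv⟩ : v ∈ I ∧ v + d ∉ S ∨ v + d ∈ I ∧ v ∉ S := by grind
    · exact hF v hv _ hvd hadj
    · exact Sym2.eq_swap ▸ hF _ hvd v hv hadj.symm
  have hkey := three_mul_sum_add_sum_abs_le hab hD hw_le hwF
  have hw_sum : ∑ v, w v = #I - #S := by simp [w]
  have hw_abs_sum : ∑ v, |w v| = #I + #S := by simp [hw_abs, Finset.sum_add_distrib]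
  omega

theorem neighborSet_addCayley {D : Finset Γ} (hD : Disjoint D (-D)) (v : Γ) :
    (SimpleGraph.addCayley (D : Set Γ)).neighborSet v =
      (v + ·) '' ((D.disjUnion (-D) hD : Finset Γ) : Set Γ) := by
  have hzero := zero_notMem_of_disjoint_neg hD
  ext u
  simp only [SimpleGraph.mem_neighborSet, SimpleGraph.addCayley_adj, Finset.mem_coe,
    Set.image_add_left, Set.mem_preimage, Finset.mem_disjUnion, Finset.mem_neg', neg_add_rev,
    neg_neg]
  refine and_iff_right_of_imp fun h => ?_
  rintro rfl
  simp [hzero] at h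

theorem degree_addCayley {D : Finset Γ} (hD : Disjoint D (-D)) (v : Γ)
    [Fintype ((SimpleGraph.addCayley (D : Set Γ)).neighborSet v)] :
    (SimpleGraph.addCayley (D : Set Γ)).degree v = 2 * #D := by
  rw [← SimpleGraph.card_neighborFinset_eq_degree, ← Set.ncard_coe_finset,
    SimpleGraph.coe_neighborFinset, neighborSet_addCayley hD,
    Set.ncard_image_of_injective _ (add_right_injective v), Set.ncard_coe_finset,
    Finset.card_disjUnion, Finset.card_neg, two_mul]

theorem ncard_edgeSet_addCayley [Fintype Γ] {D : Finset Γ} (hD : Disjoint D (-D)) :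
    (SimpleGraph.addCayley (D : Set Γ)).edgeSet.ncard = Fintype.card Γ * #D := by
  classical
  have hsum := (SimpleGraph.addCayley (D : Set Γ)).sum_degrees_eq_twice_card_edges
  simp only [degree_addCayley hD, Finset.sum_const, Finset.card_univ, smul_eq_mul] at hsum
  rw [← SimpleGraph.coe_edgeFinset, Set.ncard_coe_finset]
  linarith

theorem le_fmp_of_addCayley_le [Fintype Γ] {a b : Γ} (hab : a ≠ b)
    (hD : Disjoint {a, b, a + b} (-{a, b, a + b} : Finset Γ)) {G : SimpleGraph Γ}
    [DecidableRel G.Adj] (hG : SimpleGraph.addCayley {a, b, a + b} ≤ G) {k : ℕ} (hk : 6 ≤ k)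
    (hdeg : ∀ v, k ≤ G.degree v) : k ≤ G.fmp := by
  refine le_fmp fun F hF => ?_
  obtain ⟨S, I, hIS, hSI, hisol⟩ := exists_card_lt_card_of_not_hasFPM hF
  have hIF : ∀ u ∈ I, ∀ v ∉ S, G.Adj u v → s(u, v) ∈ F := by
    intro u hu v hv huv
    by_contra huvF
    exact hv (hisol u hu v (SimpleGraph.deleteEdges_adj.mpr ⟨huv, huvF⟩))
  obtain hS | hS := le_or_gt (#S + 3) k
  · exact le_card_of_forall_le_degree hk (fun u _ => hdeg u) hSI hS hIF
  · have := card_add_two_le_card_of_addCayley_le hab hD hG hIS hSI hIF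
    omega

end Cayley

section Harary

open scoped Pointwise

/-- The elements `1, …, h` of the cyclic group `Fin n`: the connection set of the circulant part of
the Harary graph. -/
def shortSteps (n h : ℕ) : Finset (Fin n) := {d | 1 ≤ d.val ∧ d.val ≤ h}

theorem card_shortSteps {n h : ℕ} (hh : h < n) : #(shortSteps n h) = h := by
  have himage : (shortSteps n h).map Fin.valEmbedding = Finset.Icc 1 h := by
    ext i
    simp only [shortSteps, Finset.mem_map, Finset.mem_filter, Finset.mem_univ, true_and,
      Fin.valEmbedding_apply, Finset.mem_Icc]
    exact ⟨fun ⟨_, hd, hdi⟩ => hdi ▸ hd, fun hi => ⟨⟨i, by omega⟩, hi, rfl⟩⟩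
  rw [← Finset.card_map, himage, Nat.card_Icc, Nat.add_sub_cancel]

theorem disjoint_shortSteps_neg {n h : ℕ} [NeZero n] (hh : 2 * h < n) :
    Disjoint (shortSteps n h) (-shortSteps n h) := by
  rw [Finset.disjoint_left]
  intro d hd hd'
  simp only [shortSteps, Finset.mem_neg', Finset.mem_filter, Finset.mem_univ, true_and,
    Fin.val_neg] at hd hd'
  split_ifs at hd' <;> omega

theorem triangle_subset_shortSteps {n h : ℕ} [NeZero n] (hh3 : 3 ≤ h) (hhn : h < n) :
    ({1, 2, 1 + 2} : Finset (Fin n)) ⊆ shortSteps n h := by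
  have h1 : (1 : Fin n).val = 1 := Nat.mod_eq_of_lt (show 1 < n by omega)
  have h2 : (2 : Fin n).val = 2 := Nat.mod_eq_of_lt (show 2 < n by omega)
  have h3 : (1 + 2 : Fin n).val = 3 := by
    rw [Fin.val_add, h1, h2, Nat.mod_eq_of_lt (by omega)]
  simp only [shortSteps, Finset.insert_subset_iff, Finset.singleton_subset_iff, Finset.mem_filter,
    Finset.mem_univ, true_and, h1, h2, h3]
  omega

/-- The graph joining `u` to `u + ⌊n / 2⌋` whenever this sum is less than `n`. It is a perfect
matching if `n` is even, and a matching together with a path on three vertices if `n` is odd. -/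
def antipodalGraph (n : ℕ) : SimpleGraph (Fin n) :=
  SimpleGraph.fromRel fun u v => u.val + n / 2 = v.val

theorem one_le_degree_antipodalGraph {n : ℕ} (hn : 2 ≤ n) (v : Fin n)
    [Fintype ((antipodalGraph n).neighborSet v)] : 1 ≤ (antipodalGraph n).degree v := by
  rw [Nat.one_le_iff_ne_zero, ← Nat.pos_iff_ne_zero, SimpleGraph.degree_pos_iff_exists_adj]
  obtain hv | hv := lt_or_ge v.val (n / 2)
  · exact ⟨⟨v + n / 2, by omega⟩, Fin.ne_of_val_ne (show v.val ≠ v + n / 2 by omega), .inl rfl⟩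
  · exact ⟨⟨v - n / 2, by omega⟩, Fin.ne_of_val_ne (show v.val ≠ v - n / 2 by omega),
      .inr (Nat.sub_add_cancel hv)⟩

theorem ncard_edgeSet_antipodalGraph_le (n : ℕ) :
    (antipodalGraph n).edgeSet.ncard ≤ n - n / 2 := by
  let chord (i : Fin (n - n / 2)) : Sym2 (Fin n) := s(⟨i, by omega⟩, ⟨i + n / 2, by omega⟩)
  have hmem {u v : Fin n} (huv : u.val + n / 2 = v.val) : s(u, v) ∈ Set.range chord :=
    ⟨⟨u, by omega⟩, by simp only [chord, huv]⟩
  have hsub : (antipodalGraph n).edgeSet ⊆ Set.range chord := by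
    intro e he
    induction e with
    | h u v =>
      obtain ⟨-, huv | hvu⟩ := he
      · exact hmem huv
      · exact Sym2.eq_swap ▸ hmem hvu
  calc (antipodalGraph n).edgeSet.ncard ≤ (Set.range chord).ncard := Set.ncard_le_ncard hsub
    _ ≤ (Set.univ : Set (Fin (n - n / 2))).ncard := Set.image_univ ▸ Set.ncard_image_le
    _ = n - n / 2 := by simp

theorem disjoint_addCayley_antipodalGraph {n h : ℕ} [NeZero n] (hh : h < n / 2) :
    Disjoint (SimpleGraph.addCayley (shortSteps n h : Set (Fin n))) (antipodalGraph n) := by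
  rw [SimpleGraph.disjoint_left]
  intro u v hcay ⟨_, hanti⟩
  have hfar {x y : Fin n} (hxy : x.val + n / 2 = y.val) :
      ¬ (-x + y ∈ shortSteps n h ∨ -y + x ∈ shortSteps n h) := by
    simp only [shortSteps, Finset.mem_filter, Finset.mem_univ, true_and, Fin.val_add_eq_ite,
      Fin.val_neg, Fin.ext_iff, Fin.val_zero]
    split_ifs <;> omega
  have hnear := ((SimpleGraph.addCayley_adj _ u v).mp hcay).2
  exact hanti.elim (fun huv => hfar huv hnear) fun hvu => hfar hvu hnear.symm

/-- The Harary graph on `n` vertices, built by joining each vertex to those at cyclic distance at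
most `⌊k / 2⌋` and adding the antipodal chords if `k` is odd. It has minimum degree at least `k` and
as few edges as this allows. -/
def hararyGraph (n k : ℕ) [NeZero n] : SimpleGraph (Fin n) :=
  SimpleGraph.addCayley (shortSteps n (k / 2) : Set (Fin n)) ⊔
    if Odd k then antipodalGraph n else ⊥

theorem degree_sup_of_disjoint {G H : SimpleGraph V} {v : V} (hGH : Disjoint G H)
    [Fintype (G.neighborSet v)] [Fintype (H.neighborSet v)] [Fintype ((G ⊔ H).neighborSet v)] :
    (G ⊔ H).degree v = G.degree v + H.degree v := by
  simp only [← SimpleGraph.card_neighborFinset_eq_degree,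
    SimpleGraph.neighborFinset_sup_of_disjoint v hGH, Finset.card_disjUnion]

theorem le_degree_hararyGraph {n k : ℕ} [NeZero n] (hkn : k < n) (v : Fin n)
    [Fintype ((hararyGraph n k).neighborSet v)] : k ≤ (hararyGraph n k).degree v := by
  classical
  have hD := disjoint_shortSteps_neg (n := n) (h := k / 2) (by omega)
  have hcirc := degree_addCayley hD v
  rw [card_shortSteps (by omega)] at hcirc
  obtain hk | hk := k.even_or_odd
  · have hle : SimpleGraph.addCayley ↑(shortSteps n (k / 2)) ≤ hararyGraph n k := le_sup_left
    calc k = 2 * (k / 2) := (Nat.two_mul_div_two_of_even hk).symm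
      _ = (SimpleGraph.addCayley ↑(shortSteps n (k / 2))).degree v := hcirc.symm
      _ ≤ (hararyGraph n k).degree v := SimpleGraph.degree_le_of_le hle
  · have hle : SimpleGraph.addCayley ↑(shortSteps n (k / 2)) ⊔ antipodalGraph n ≤
        hararyGraph n k := by rw [hararyGraph, if_pos hk]
    have hk2 := Nat.two_mul_div_two_add_one_of_odd hk
    calc k = 2 * (k / 2) + 1 := hk2.symm
      _ ≤ (SimpleGraph.addCayley ↑(shortSteps n (k / 2))).degree v +
          (antipodalGraph n).degree v :=
        add_le_add hcirc.ge (one_le_degree_antipodalGraph (by omega) v)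
      _ = (SimpleGraph.addCayley ↑(shortSteps n (k / 2)) ⊔ antipodalGraph n).degree v :=
        (degree_sup_of_disjoint (disjoint_addCayley_antipodalGraph (by omega))).symm
      _ ≤ (hararyGraph n k).degree v := SimpleGraph.degree_le_of_le hle

theorem ncard_edgeSet_hararyGraph_le {n k : ℕ} [NeZero n] (hkn : k < n) :
    (hararyGraph n k).edgeSet.ncard ≤ (n * k + 1) / 2 := by
  have hD := disjoint_shortSteps_neg (n := n) (h := k / 2) (by omega)
  have hcirc := ncard_edgeSet_addCayley hD
  rw [card_shortSteps (by omega), Fintype.card_fin] at hcirc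
  rw [hararyGraph]
  obtain hk | hk := k.even_or_odd
  · rw [if_neg (Nat.not_odd_iff_even.mpr hk), sup_bot_eq, hcirc]
    have hnk : n * k = 2 * (n * (k / 2)) := by
      conv_lhs => rw [← Nat.two_mul_div_two_of_even hk]
      ring
    omega
  · rw [if_pos hk, SimpleGraph.edgeSet_sup]
    have hunion := Set.ncard_union_le (SimpleGraph.addCayley ↑(shortSteps n (k / 2))).edgeSet
      (antipodalGraph n).edgeSet
    have hanti := ncard_edgeSet_antipodalGraph_le n
    have hnk : n * k = 2 * (n * (k / 2)) + n := by
      conv_lhs => rw [← Nat.two_mul_div_two_add_one_of_odd hk]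
      ring
    omega

theorem le_fmp_hararyGraph {n k : ℕ} [NeZero n] (hk : 6 ≤ k) (hkn : k < n) :
    k ≤ (hararyGraph n k).fmp := by
  classical
  have hsub : ({1, 2, 1 + 2} : Finset (Fin n)) ⊆ shortSteps n (k / 2) :=
    triangle_subset_shortSteps (by omega) (by omega)
  have hdisj : Disjoint {1, 2, 1 + 2} (-{1, 2, 1 + 2} : Finset (Fin n)) :=
    (disjoint_shortSteps_neg (by omega)).mono hsub (Finset.neg_subset_neg hsub)
  have hcay : SimpleGraph.addCayley ({1, 2, 1 + 2} : Set (Fin n)) ≤ hararyGraph n k :=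
    le_sup_of_le_left (SimpleGraph.addCayley_mono (by simpa using Finset.coe_subset.mpr hsub))
  have hne : (1 : Fin n) ≠ 2 := by
    simp [Fin.ext_iff, Nat.mod_eq_of_lt (show 1 < n by omega),
      Nat.mod_eq_of_lt (show 2 < n by omega)]
  exact le_fmp_of_addCayley_le hne hdisj hcay hk fun v => le_degree_hararyGraph hkn v

end Harary

theorem s_nk_case2_general {n k : ℕ} (hk : 6 ≤ k) (hkn : k < n) :
    IsLeast {m : ℕ | ∃ G : SimpleGraph (Fin n), G.fmp = k ∧ G.edgeSet.ncard = m}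
      ((n * k + 1) / 2) := by
  have hlower (G : SimpleGraph (Fin n)) : n * G.fmp ≤ 2 * G.edgeSet.ncard := by
    simpa using card_mul_fmp_le_two_mul_ncard_edgeSet G
  have : NeZero n := ⟨by omega⟩
  have hedges := ncard_edgeSet_hararyGraph_le hkn
  have hfmp : (hararyGraph n k).fmp = k := by
    refine le_antisymm ?_ (le_fmp_hararyGraph hk hkn)
    by_contra! hlt
    have hmul : n * (k + 1) ≤ n * (hararyGraph n k).fmp := Nat.mul_le_mul_left n hlt
    rw [Nat.mul_add_one] at hmul
    have := hlower (hararyGraph n k)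
    omega
  constructor
  · have := hlower (hararyGraph n k)
    rw [hfmp] at this
    exact ⟨hararyGraph n k, hfmp, by omega⟩
  · rintro _ ⟨G, rfl, rfl⟩
    have := hlower G
    omega

theorem s_nk_case2 (n k l r : ℕ) (hn : 1 ≤ n) (hk6 : 6 ≤ k) (hkn : k ≤ n - 1)
    (hdecomp : n = l * (k + 1) + r) (hr : r ≤ k)
    (hcase : 1 ≤ r ∧ Even (k + r) ∧ Odd k ∧ 2 ≤ l) :
    ∃ m : ℕ, 2 * m = n * k + 1 ∧
      IsLeast {m : ℕ | ∃ G : SimpleGraph (Fin n), G.fmp = k ∧ G.edgeSet.ncard = m} m := by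
  obtain ⟨-, hkr, hkodd, -⟩ := hcase
  have hrodd : Odd r := (Nat.even_add'.mp hkr).mp hkodd
  have hnodd : Odd n := hdecomp ▸ (hkodd.add_one.mul_left l).add_odd hrodd
  have hm : 2 * ((n * k + 1) / 2) = n * k + 1 :=
    Nat.two_mul_div_two_of_even (hnodd.mul hkodd).add_one
  exact ⟨_, hm, s_nk_case2_general hk6 (by omega)⟩
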